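/- arXiv:2104.11910 — 2 statements merged into one kernel-verified Lean document; each statement's English description precedes it below -/
import Mathlib

section
/- Let G be a connected, non-complete strongly regular graph with parameters (n, d, λ, μ), and let the eigenvalues of its adjacency matrix A_G be λ_1 ≥ λ_2 ≥ … ≥ λ_n. Then for every k ≥ 1, ϑ_k(G) = min{ k·ϑ(G), n } = min{ k·n·λ_n/(λ_n − λ_1), n }. -/
open Finset

/-- The sum of the `k` largest eigenvalues (counted with multiplicity) of a
Hermitian real matrix, realized as the supremum over all choices of
`min k n` eigenvalues of their sum. -/
noncomputable def sumKEig {V : Type*} [Fintype V] [DecidableEq V] (k : ℕ)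
    (A : Matrix V V ℝ) (hA : A.IsHermitian) : ℝ :=
  sSup {x : ℝ | ∃ s : Finset V, s.card = min k (Fintype.card V) ∧
    x = ∑ i ∈ s, hA.eigenvalues i}

/-- The generalized theta number `ϑ_k(G)`: the infimum of the sum of the `k`
largest eigenvalues over all real symmetric matrices `A` with `A i j = 1`
whenever `(i,j)` is not an edge of `G`. -/
noncomputable def gtheta {V : Type*} [Fintype V] [DecidableEq V]
    (k : ℕ) (G : SimpleGraph V) : ℝ :=
  sInf {x : ℝ | ∃ (A : Matrix V V ℝ) (hA : A.IsHermitian),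
    (∀ i j, ¬ G.Adj i j → A i j = 1) ∧ x = sumKEig k A hA}

/-!
Write `A` for the adjacency matrix, `n` for the order, `d` for the degree, `τ` for the least
eigenvalue of `A` and `J` for the all-ones matrix.

For the upper bound, `J` itself has trace `n` and is positive semidefinite, so `ϑ_k ≤ n`; and
`J + n / (τ - d) • A`, whose eigenvalue on the constant vectors coincides with its largest
eigenvalue on their complement, has largest eigenvalue `n τ / (τ - d)`, so `ϑ_k` is at most `k`
times that.

For the lower bound, Ky Fan's inequality `tr (M Y) ≤ S_k(M)` holds for every `0 ≤ Y ≤ 1` of trace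
`min k n`. If `Y` vanishes on the edges then `tr (M Y) = tr (J Y)` for every feasible `M`, and we
take for `Y` a combination of the identity and the adjacency matrix of the complement.

Strong regularity makes the two bounds coincide: with `θ` the second root of the quadratic satisfied
by `τ` one has `(A - θ) (A - τ) = μ J`, so the least eigenvalue of the complement is at least
`-(1 + θ)`, and `1 + (n - 1 - d) / (1 + θ) = n τ / (τ - d)`.
-/

open Matrix
open scoped MatrixOrder

section AntitoneFin

variable {n : ℕ} {α : Type*} [Preorder α] {f : Fin n → α}

theorem isGreatest_range_of_antitone (hf : Antitone f) (hn : 0 < n) :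
    IsGreatest (Set.range f) (f ⟨0, hn⟩) := by
  refine ⟨⟨_, rfl⟩, ?_⟩
  rintro _ ⟨i, rfl⟩
  exact hf (Fin.mk_le_of_le_val (Nat.zero_le i))

theorem isLeast_range_of_antitone (hf : Antitone f) (hn : 0 < n) :
    IsLeast (Set.range f) (f ⟨n - 1, by omega⟩) := by
  refine ⟨⟨_, rfl⟩, ?_⟩
  rintro _ ⟨i, rfl⟩
  exact hf (Fin.le_def.2 (Nat.le_sub_one_of_lt i.isLt))

end AntitoneFin

section Spectrum

section Field

variable {V K : Type*} [Fintype V] [DecidableEq V] [Field K] {A : Matrix V V K} {c : K}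

theorem exists_mulVec_eq_smul_of_mem_spectrum (hc : c ∈ spectrum K A) :
    ∃ v ≠ 0, A *ᵥ v = c • v := by
  rw [← spectrum_toLin'] at hc
  obtain ⟨v, hv⟩ := (Module.End.HasEigenvalue.of_mem_spectrum hc).exists_hasEigenvector
  exact ⟨v, hv.2, hv.apply_eq_smul⟩

theorem mem_spectrum_of_mulVec_eq_smul {v : V → K} (hv₀ : v ≠ 0) (hv : A *ᵥ v = c • v) :
    c ∈ spectrum K A := by
  rw [← spectrum_toLin']
  exact (Module.End.hasEigenvalue_of_hasEigenvector
    ⟨Module.End.mem_eigenspace_iff.2 hv, hv₀⟩).mem_spectrum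

end Field

variable {V : Type*} [Fintype V] [DecidableEq V] {A : Matrix V V ℝ} {c : ℝ}

theorem smul_one_le_iff_le_spectrum (hA : A.IsHermitian) :
    c • 1 ≤ A ↔ ∀ x ∈ spectrum ℝ A, c ≤ x := by
  rw [← Algebra.algebraMap_eq_smul_one, algebraMap_le_iff_le_spectrum hA]

theorem le_smul_one_iff_spectrum_le (hA : A.IsHermitian) :
    A ≤ c • 1 ↔ ∀ x ∈ spectrum ℝ A, x ≤ c := by
  rw [← Algebra.algebraMap_eq_smul_one, le_algebraMap_iff_spectrum_le hA]

theorem range_eq_spectrum_of_enum (hA : A.IsHermitian) {n : ℕ} {lam : Fin n → ℝ}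
    (henum : ∃ e : Fin n ≃ V, ∀ i, lam i = hA.eigenvalues (e i)) :
    Set.range lam = spectrum ℝ A := by
  obtain ⟨e, he⟩ := henum
  rw [hA.spectrum_real_eq_range_eigenvalues, show lam = hA.eigenvalues ∘ e from funext he,
    e.surjective.range_comp]

end Spectrum

section SumLargestEigenvalues

theorem exists_card_eq_forall_le_threshold {ι R : Type*} [Fintype ι] [LinearOrder R] [Nonempty R]
    (f : ι → R) {k : ℕ} (hk : k ≤ Fintype.card ι) :
    ∃ (s : Finset ι) (c : R), #s = k ∧ (∀ i ∈ s, c ≤ f i) ∧ ∀ i ∉ s, f i ≤ c := by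
  classical
  induction k with
  | zero =>
    obtain ⟨c, hc⟩ := (Set.finite_range f).bddAbove
    exact ⟨∅, c, rfl, by simp, fun i _ => hc ⟨i, rfl⟩⟩
  | succ k ih =>
    obtain ⟨s, c, hcard, hmem, hnotMem⟩ := ih (by omega)
    have hsc : sᶜ.Nonempty := by rw [← card_pos, card_compl]; omega
    obtain ⟨j, hj, hmax⟩ := sᶜ.exists_max_image f hsc
    rw [mem_compl] at hj
    refine ⟨insert j s, f j, by rw [card_insert_of_notMem hj, hcard], ?_, ?_⟩
    · rintro i hi
      obtain rfl | hi := mem_insert.1 hi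
      · rfl
      · exact (hnotMem j hj).trans (hmem i hi)
    · intro i hi
      exact hmax i (mem_compl.2 fun his => hi (mem_insert_of_mem his))

theorem exists_sum_mul_le_sum_of_mem_Icc {ι R : Type*} [Fintype ι] [CommRing R] [LinearOrder R]
    [IsStrictOrderedRing R] (f w : ι → R) {k : ℕ} (hk : k ≤ Fintype.card ι)
    (hw : ∀ i, w i ∈ Set.Icc 0 1) (hsum : ∑ i, w i = k) :
    ∃ s : Finset ι, #s = k ∧ ∑ i, f i * w i ≤ ∑ i ∈ s, f i := by
  classical
  obtain ⟨s, c, hcard, hmem, hnotMem⟩ := exists_card_eq_forall_le_threshold f hk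
  refine ⟨s, hcard, ?_⟩
  have hterm (i : ι) : (f i - c) * w i ≤ if i ∈ s then f i - c else 0 := by
    split_ifs with hi
    · exact mul_le_of_le_one_right (sub_nonneg.2 (hmem i hi)) (hw i).2
    · exact mul_nonpos_of_nonpos_of_nonneg (sub_nonpos.2 (hnotMem i hi)) (hw i).1
  have hsum_le : ∑ i, (f i - c) * w i ≤ ∑ i ∈ s, (f i - c) := by
    simpa only [sum_ite_mem, univ_inter] using sum_le_sum fun i (_ : i ∈ univ) => hterm i
  simp only [sub_mul, sum_sub_distrib, ← mul_sum, hsum, sum_const, hcard, nsmul_eq_mul] at hsum_le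
  linarith

variable {V : Type*} [Fintype V] [DecidableEq V] {A : Matrix V V ℝ} (hA : A.IsHermitian) (k : ℕ)

theorem sum_eigenvalues_le_sumKEig {s : Finset V} (hs : #s = min k (Fintype.card V)) :
    ∑ i ∈ s, hA.eigenvalues i ≤ sumKEig k A hA := by
  refine le_csSup ?_ ⟨s, hs, rfl⟩
  refine (Set.finite_range fun t : Finset V => ∑ i ∈ t, hA.eigenvalues i).bddAbove.mono ?_
  rintro _ ⟨t, -, rfl⟩
  exact ⟨t, rfl⟩

theorem sumKEig_le {c : ℝ}
    (h : ∀ s : Finset V, #s = min k (Fintype.card V) → ∑ i ∈ s, hA.eigenvalues i ≤ c) :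
    sumKEig k A hA ≤ c := by
  obtain ⟨s, -, hs⟩ := exists_subset_card_eq (min_le_right k #(univ : Finset V))
  refine csSup_le ⟨_, s, hs, rfl⟩ ?_
  rintro _ ⟨t, ht, rfl⟩
  exact h t ht

theorem sumKEig_le_mul_of_le_smul_one {c : ℝ} (hc : 0 ≤ c) (hAc : A ≤ c • 1) :
    sumKEig k A hA ≤ k * c := by
  rw [le_smul_one_iff_spectrum_le hA] at hAc
  refine sumKEig_le hA k fun s hs => ?_
  calc ∑ i ∈ s, hA.eigenvalues i
      ≤ #s • c := sum_le_card_nsmul _ _ _ fun i _ => hAc _ (hA.eigenvalues_mem_spectrum_real i)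
    _ = #s * c := nsmul_eq_mul _ _
    _ ≤ k * c := by gcongr; exact hs.trans_le (min_le_left _ _)

theorem sumKEig_le_trace (hpos : A.PosSemidef) : sumKEig k A hA ≤ A.trace := by
  refine sumKEig_le hA k fun s _ => ?_
  calc ∑ i ∈ s, hA.eigenvalues i
      ≤ ∑ i, hA.eigenvalues i :=
        sum_le_univ_sum_of_nonneg hpos.eigenvalues_nonneg
    _ = A.trace := hA.trace_eq_sum_eigenvalues.symm

theorem trace_mul_eq_sum_eigenvalues_mul (Y : Matrix V V ℝ) :
    (A * Y).trace = ∑ i, hA.eigenvalues i *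
      (star (hA.eigenvectorUnitary : Matrix V V ℝ) * Y * hA.eigenvectorUnitary) i i := by
  set U := (hA.eigenvectorUnitary : Matrix V V ℝ)
  have hspec : A = U * diagonal hA.eigenvalues * star U := hA.spectral_theorem
  calc (A * Y).trace = (U * diagonal hA.eigenvalues * star U * Y).trace := by rw [← hspec]
    _ = (diagonal hA.eigenvalues * (star U * Y * U)).trace := by
      rw [mul_assoc, mul_assoc, trace_mul_comm, mul_assoc]
    _ = ∑ i, hA.eigenvalues i * (star U * Y * U) i i := by
      simp only [trace, diag_apply, diagonal_mul]

-- In an eigenbasis of `A` the diagonal entries of `Y` are weights in `[0, 1]` of total mass `k`.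
theorem trace_mul_le_sumKEig {Y : Matrix V V ℝ} (hY₀ : 0 ≤ Y) (hY₁ : Y ≤ 1)
    (htr : Y.trace = (min k (Fintype.card V) : ℕ)) :
    (A * Y).trace ≤ sumKEig k A hA := by
  rw [trace_mul_eq_sum_eigenvalues_mul hA Y]
  set U := (hA.eigenvectorUnitary : Matrix V V ℝ)
  have hUU : U * star U = 1 := Unitary.coe_mul_star_self hA.eigenvectorUnitary
  have hUU' : star U * U = 1 := Unitary.coe_star_mul_self hA.eigenvectorUnitary
  have hW₀ : (star U * Y * U).PosSemidef :=
    nonneg_iff_posSemidef.1 (star_left_conjugate_nonneg hY₀ U)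
  have hW₁ : (1 - star U * Y * U).PosSemidef := by
    simpa only [mul_one, hUU'] using le_iff.1 (star_left_conjugate_le_conjugate hY₁ U)
  have hWtr : (star U * Y * U).trace = (min k (Fintype.card V) : ℕ) := by
    rw [trace_mul_cycle, hUU, one_mul, htr]
  obtain ⟨s, hs, hle⟩ := exists_sum_mul_le_sum_of_mem_Icc hA.eigenvalues _ (min_le_right k _)
    (fun i => ⟨hW₀.diag_nonneg, by simpa using hW₁.diag_nonneg (i := i)⟩) hWtr
  exact hle.trans (sum_eigenvalues_le_sumKEig hA k hs)

theorem sumKEig_nonneg_of_trace_nonneg (htr : 0 ≤ A.trace) : 0 ≤ sumKEig k A hA := by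
  set a : ℝ := (min k (Fintype.card V) : ℕ) / Fintype.card V
  have ha₀ : 0 ≤ a := by positivity
  have ha₁ : a ≤ 1 := div_le_one_of_le₀ (mod_cast min_le_right _ _) (by positivity)
  have hmean : (A * a • 1).trace ≤ sumKEig k A hA := by
    refine trace_mul_le_sumKEig hA k (smul_nonneg ha₀ zero_le_one)
      (smul_le_of_le_one_left zero_le_one ha₁) ?_
    rw [trace_smul, trace_one, smul_eq_mul]
    exact div_mul_cancel_of_imp fun h => by simp_all
  refine le_trans ?_ hmean
  rw [mul_smul_comm, mul_one, trace_smul]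
  exact smul_nonneg ha₀ htr

end SumLargestEigenvalues

local notation "𝐉" => (Matrix.of 1 : Matrix _ _ _)

section AllOnes

theorem adjMatrix_compl_eq_sub {V R : Type*} [DecidableEq V] [Ring R] (G : SimpleGraph V)
    [DecidableRel G.Adj] : Gᶜ.adjMatrix R = 𝐉 - 1 - G.adjMatrix R := by
  classical
  rw [← G.one_add_adjMatrix_add_compl_adjMatrix_eq_of_one (α := R),
    SimpleGraph.compl_adjMatrix_eq_adjMatrix_compl]
  abel

variable {V : Type*}

theorem posSemidef_of_one [Finite V] : (𝐉 : Matrix V V ℝ).PosSemidef := by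
  have hJ : (𝐉 : Matrix V V ℝ) = vecMulVec 1 (star 1) := by ext; simp [vecMulVec_apply]
  exact hJ ▸ posSemidef_vecMulVec_self_star 1

variable [Fintype V] {R : Type*} [Semiring R] {G : SimpleGraph V}

theorem of_one_mul_of_one : (𝐉 * 𝐉 : Matrix V V R) = (Fintype.card V : R) • 𝐉 := by
  ext; simp [mul_apply]

theorem trace_of_one : (𝐉 : Matrix V V R).trace = Fintype.card V := by
  simp [trace]

theorem trace_mul_eq_trace_of_one_mul {A Y : Matrix V V R} (hAG : ∀ i j, ¬G.Adj i j → A i j = 1)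
    (hYG : ∀ i j, G.Adj i j → Y i j = 0) : (A * Y).trace = (𝐉 * Y).trace := by
  simp only [trace, diag_apply, mul_apply, of_apply, Pi.one_apply]
  refine sum_congr rfl fun i _ => sum_congr rfl fun j _ => ?_
  by_cases hij : G.Adj i j
  · rw [hYG j i hij.symm, mul_zero, mul_zero]
  · rw [hAG i j hij]

variable [DecidableRel G.Adj] {d : ℕ}

theorem adjMatrix_mul_of_one (hreg : G.IsRegularOfDegree d) :
    G.adjMatrix R * 𝐉 = (d : R) • 𝐉 := by
  ext i j; simp [SimpleGraph.adjMatrix_mul_apply, hreg.degree_eq i]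

theorem of_one_mul_adjMatrix (hreg : G.IsRegularOfDegree d) :
    𝐉 * G.adjMatrix R = (d : R) • 𝐉 := by
  ext i j; simp [SimpleGraph.mul_adjMatrix_apply, hreg.degree_eq j]

theorem adjMatrix_mulVec_one (hreg : G.IsRegularOfDegree d) :
    G.adjMatrix R *ᵥ 1 = (d : R) • (1 : V → R) := by
  ext i
  simp [hreg.degree_eq]

end AllOnes

section ThetaBounds

variable {V : Type*} [Fintype V] [DecidableEq V] {G : SimpleGraph V}

theorem le_gtheta {k : ℕ} {c : ℝ}
    (h : ∀ (A : Matrix V V ℝ) (hA : A.IsHermitian), (∀ i j, ¬G.Adj i j → A i j = 1) →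
      c ≤ sumKEig k A hA) :
    c ≤ gtheta k G := by
  refine le_csInf ⟨_, 𝐉, posSemidef_of_one.isHermitian, by simp, rfl⟩ ?_
  rintro _ ⟨A, hA, hAG, rfl⟩
  exact h A hA hAG

theorem gtheta_le_sumKEig (k : ℕ) {A : Matrix V V ℝ} (hA : A.IsHermitian)
    (hAG : ∀ i j, ¬G.Adj i j → A i j = 1) : gtheta k G ≤ sumKEig k A hA := by
  refine csInf_le ⟨0, ?_⟩ ⟨A, hA, hAG, rfl⟩
  rintro _ ⟨B, hB, hBG, rfl⟩
  refine sumKEig_nonneg_of_trace_nonneg hB k (sum_nonneg fun i _ => ?_)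
  rw [diag_apply, hBG i i G.irrefl]
  exact zero_le_one

theorem gtheta_le_card (k : ℕ) : gtheta k G ≤ Fintype.card V := by
  have hJ := posSemidef_of_one (V := V)
  calc gtheta k G ≤ sumKEig k 𝐉 hJ.isHermitian := gtheta_le_sumKEig k _ (by simp)
    _ ≤ (𝐉 : Matrix V V ℝ).trace := sumKEig_le_trace _ k hJ
    _ = Fintype.card V := trace_of_one

variable [DecidableRel G.Adj] {d : ℕ}

theorem adjMatrix_le_smul_one (hreg : G.IsRegularOfDegree d) :
    G.adjMatrix ℝ ≤ (d : ℝ) • 1 := by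
  have hdeg : G.degMatrix ℝ = (d : ℝ) • 1 := by
    simp [SimpleGraph.degMatrix, hreg.degree_eq, smul_one_eq_diagonal]
  rw [le_iff, ← hdeg]
  exact SimpleGraph.posSemidef_lapMatrix ℝ G

-- Compress `A - τ` to the orthogonal complement of the constant vectors.
theorem smul_one_add_smul_of_one_le_adjMatrix [Nonempty V] (hreg : G.IsRegularOfDegree d) {τ : ℝ}
    (hτ : τ • 1 ≤ G.adjMatrix ℝ) :
    τ • 1 + ((d - τ) / Fintype.card V) • 𝐉 ≤ G.adjMatrix ℝ := by
  set P : Matrix V V ℝ := 1 - (1 / Fintype.card V : ℝ) • 𝐉 with hP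
  have hcard : (Fintype.card V : ℝ) ≠ 0 := by simp
  have hPstar : star P = P :=
    isHermitian_one.sub (posSemidef_of_one.isHermitian.smul (.all _))
  have hconj := star_left_conjugate_nonneg (sub_nonneg.2 hτ) P
  rw [← sub_nonneg]
  convert! hconj using 1
  rw [hPstar, hP]
  simp only [mul_sub, sub_mul, one_mul, mul_one, mul_smul_comm, smul_mul_assoc,
    adjMatrix_mul_of_one hreg, of_one_mul_adjMatrix hreg, of_one_mul_of_one]
  match_scalars <;> field_simp
  ring

theorem gtheta_le_mul_of_smul_one_le [Nonempty V] (hreg : G.IsRegularOfDegree d) {τ : ℝ}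
    (hτ₀ : τ < 0) (hτ : τ • 1 ≤ G.adjMatrix ℝ) (k : ℕ) :
    gtheta k G ≤ k * (Fintype.card V * τ / (τ - d)) := by
  have hτd : τ - d < 0 := sub_neg.2 (hτ₀.trans_le d.cast_nonneg)
  have hcard : (Fintype.card V : ℝ) ≠ 0 := by simp
  set t : ℝ := Fintype.card V / (τ - d) with ht
  have ht₀ : 0 ≤ -t := neg_nonneg.2 (div_nonpos_of_nonneg_of_nonpos (by positivity) hτd.le)
  have hherm : (𝐉 + t • G.adjMatrix ℝ).IsHermitian :=
    posSemidef_of_one.isHermitian.add ((G.isHermitian_adjMatrix ℝ).smul (.all t))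
  have hle : 𝐉 + t • G.adjMatrix ℝ ≤ (Fintype.card V * τ / (τ - d)) • 1 := by
    have hgap := smul_nonneg ht₀ (sub_nonneg.2 (smul_one_add_smul_of_one_le_adjMatrix hreg hτ))
    rw [← sub_nonneg]
    convert! hgap using 1
    match_scalars <;> rw [ht] <;> field_simp [hτd.ne]
    ring
  calc gtheta k G ≤ sumKEig k _ hherm :=
        gtheta_le_sumKEig k hherm fun i j hij => by simp [hij]
    _ ≤ k * (Fintype.card V * τ / (τ - d)) :=
        sumKEig_le_mul_of_le_smul_one hherm k
          (div_nonneg_of_nonpos (mul_nonpos_of_nonneg_of_nonpos (by positivity) hτ₀.le) hτd.le) hle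

theorem exists_add_mul_eq_min {R : Type*} [Field R] [LinearOrder R] [IsStrictOrderedRing R]
    {a σ m : R} (ha₀ : 0 ≤ a) (ha₁ : a ≤ 1) (hσ : 0 < σ) (hm : 0 ≤ m) :
    ∃ b, 0 ≤ b ∧ b * σ ≤ a ∧ a + b * m = min (a * (1 + m / σ)) 1 := by
  obtain hle | hlt := le_or_gt (a * (1 + m / σ)) 1
  · refine ⟨a / σ, by positivity, (div_mul_cancel₀ a hσ.ne').le, ?_⟩
    rw [min_eq_left hle]
    ring
  · have hm₀ : 0 < m := hm.lt_of_ne' fun h => by simp [h, ha₁.not_gt] at hlt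
    refine ⟨(1 - a) / m, div_nonneg (sub_nonneg.2 ha₁) hm, ?_, ?_⟩
    · field_simp at hlt ⊢
      linarith
    · rw [min_eq_right hlt.le, div_mul_cancel₀ _ hm₀.ne', add_sub_cancel]

variable {m : ℕ} {σ : ℝ}

-- `Y = a • 1 + b • Gᶜ.adjMatrix ℝ`, with `b` the largest value for which `0 ≤ Y ≤ 1` still follows.
theorem exists_weight_trace_of_one_mul_eq (hreg : Gᶜ.IsRegularOfDegree m) (hσ₀ : 0 < σ)
    (hσ : -(σ • 1) ≤ Gᶜ.adjMatrix ℝ) {K : ℕ} (hK : K ≤ Fintype.card V) :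
    ∃ Y : Matrix V V ℝ, 0 ≤ Y ∧ Y ≤ 1 ∧ Y.trace = K ∧ (∀ i j, G.Adj i j → Y i j = 0) ∧
      (𝐉 * Y).trace = min (K * (1 + m / σ)) (Fintype.card V) := by
  have hcancel : (K : ℝ) / Fintype.card V * Fintype.card V = K :=
    div_mul_cancel_of_imp fun h => by simp_all
  set a : ℝ := K / Fintype.card V
  have ha₁ : a ≤ 1 := div_le_one_of_le₀ (mod_cast hK) (by positivity)
  obtain ⟨b, hb₀, hbσ, hsum⟩ :=
    exists_add_mul_eq_min (by positivity : 0 ≤ a) ha₁ hσ₀ m.cast_nonneg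
  refine ⟨a • 1 + b • Gᶜ.adjMatrix ℝ, ?_, ?_, ?_, fun i j hij => by simp [hij, hij.ne], ?_⟩
  · calc (0 : Matrix V V ℝ) ≤ (a - b * σ) • 1 := smul_nonneg (sub_nonneg.2 hbσ) zero_le_one
      _ = a • 1 + b • -(σ • 1) := by module
      _ ≤ a • 1 + b • Gᶜ.adjMatrix ℝ := by gcongr
  · calc a • 1 + b • Gᶜ.adjMatrix ℝ ≤ a • 1 + b • (m : ℝ) • (1 : Matrix V V ℝ) := by
          gcongr
          exact adjMatrix_le_smul_one hreg
      _ = (a + b * m) • 1 := by module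
      _ ≤ 1 := smul_le_of_le_one_left zero_le_one (hsum.trans_le (min_le_right _ _))
  · simp [trace_add, trace_smul, hcancel]
  · calc (𝐉 * (a • 1 + b • Gᶜ.adjMatrix ℝ)).trace
        = (a + b * m) * Fintype.card V := by
          rw [mul_add, mul_smul_comm, mul_smul_comm, mul_one, of_one_mul_adjMatrix hreg, smul_smul,
            ← add_smul, trace_smul, trace_of_one, smul_eq_mul]
      _ = min (K * (1 + m / σ)) (Fintype.card V) := by
          rw [hsum, min_mul_of_nonneg _ _ (by positivity), one_mul, mul_right_comm, hcancel]

theorem min_mul_one_add_div_le_gtheta (hreg : Gᶜ.IsRegularOfDegree m) (hσ₀ : 0 < σ)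
    (hσ : -(σ • 1) ≤ Gᶜ.adjMatrix ℝ) (k : ℕ) :
    min (k * (1 + m / σ)) (Fintype.card V) ≤ gtheta k G := by
  refine le_gtheta fun A hA hAG => ?_
  obtain ⟨Y, hY₀, hY₁, htr, hYG, hJY⟩ :=
    exists_weight_trace_of_one_mul_eq hreg hσ₀ hσ (min_le_right k _)
  refine le_trans ?_ (trace_mul_le_sumKEig hA k hY₀ hY₁ htr)
  rw [trace_mul_eq_trace_of_one_mul hAG hYG, hJY]
  have hϑ : 1 ≤ 1 + m / σ := le_add_of_nonneg_right (by positivity)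
  obtain hk | hk := le_total k (Fintype.card V)
  · rw [min_eq_left hk]
  · rw [min_eq_right hk, min_eq_right (le_mul_of_one_le_right (by positivity) hϑ)]
    exact min_le_right _ _

end ThetaBounds

section StronglyRegular

variable {V : Type*} [Fintype V] {G : SimpleGraph V} [DecidableRel G.Adj] {n d l μ : ℕ} {θ τ : ℝ}

theorem lt_card_of_isRegularOfDegree [Nonempty V] (hreg : G.IsRegularOfDegree d) :
    d < Fintype.card V := by
  rw [← hreg.degree_eq (Classical.arbitrary V)]
  exact G.degree_lt_card_verts _

theorem adjMatrix_mul_self_of_isSRGWith [DecidableEq V] (hsrg : G.IsSRGWith n d l μ) :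
    G.adjMatrix ℝ * G.adjMatrix ℝ =
      ((d : ℝ) - μ) • 1 + ((l : ℝ) - μ) • G.adjMatrix ℝ + (μ : ℝ) • 𝐉 := by
  have hsq := hsrg.matrix_eq (α := ℝ)
  simp only [← Nat.cast_smul_eq_nsmul ℝ, adjMatrix_compl_eq_sub] at hsq
  rw [← sq, hsq]
  module

theorem sq_smul_eq_of_adjMatrix_mulVec_eq_smul (hsrg : G.IsSRGWith n d l μ) {v : V → ℝ}
    (hv : G.adjMatrix ℝ *ᵥ v = τ • v) :
    τ ^ 2 • v = ((d - μ) + (l - μ) * τ) • v + (μ : ℝ) • (𝐉 : Matrix V V ℝ) *ᵥ v := by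
  classical
  calc τ ^ 2 • v = (G.adjMatrix ℝ * G.adjMatrix ℝ) *ᵥ v := by
        rw [← mulVec_mulVec, hv, mulVec_smul, hv, smul_smul, sq]
    _ = ((d - μ) + (l - μ) * τ) • v + (μ : ℝ) • (𝐉 : Matrix V V ℝ) *ᵥ v := by
        rw [adjMatrix_mul_self_of_isSRGWith hsrg, add_mulVec, add_mulVec, smul_mulVec, smul_mulVec,
          smul_mulVec, one_mulVec, hv, smul_smul, ← add_smul]

theorem card_mul_eq_of_isSRGWith [Nonempty V] (hsrg : G.IsSRGWith n d l μ)
    (hsum : θ + τ = l - μ) (hprod : θ * τ = μ - d) : (n : ℝ) * μ = (d - θ) * (d - τ) := by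
  have hsq := congrFun
    (sq_smul_eq_of_adjMatrix_mulVec_eq_smul hsrg (adjMatrix_mulVec_one hsrg.regular))
    (Classical.arbitrary V)
  have hd : (d : ℝ) ^ 2 = (d - μ) + (l - μ) * d + μ * n := by
    simpa [mulVec, dotProduct, hsrg.card] using hsq
  linear_combination -hd - hprod + (d : ℝ) * hsum

theorem sq_eq_of_mem_spectrum_of_ne [DecidableEq V] (hsrg : G.IsSRGWith n d l μ)
    (hτ : τ ∈ spectrum ℝ (G.adjMatrix ℝ)) (hne : τ ≠ d) :
    τ ^ 2 = (d - μ) + (l - μ) * τ := by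
  obtain ⟨v, hv₀, hv⟩ := exists_mulVec_eq_smul_of_mem_spectrum hτ
  have hJv : (𝐉 : Matrix V V ℝ) *ᵥ v = 0 := by
    have heq : τ • (𝐉 : Matrix V V ℝ) *ᵥ v = (d : ℝ) • (𝐉 : Matrix V V ℝ) *ᵥ v := by
      rw [← mulVec_smul, ← hv, mulVec_mulVec, of_one_mul_adjMatrix hsrg.regular, smul_mulVec]
    by_contra hJv
    exact hne (smul_left_injective ℝ hJv heq)
  refine smul_left_injective ℝ hv₀ ?_
  simpa only [hJv, smul_zero, add_zero] using sq_smul_eq_of_adjMatrix_mulVec_eq_smul hsrg hv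

theorem adjMatrix_le_smul_one_add_smul_of_one [DecidableEq V] [Nonempty V]
    (hsrg : G.IsSRGWith n d l μ) (hsum : θ + τ = l - μ) (hprod : θ * τ = μ - d) (hlt : τ < θ) :
    G.adjMatrix ℝ ≤ θ • 1 + ((d - θ) / n) • 𝐉 := by
  have hcard := card_mul_eq_of_isSRGWith hsrg hsum hprod
  have hn : (n : ℝ) ≠ 0 := by simp [← hsrg.card]
  set M := θ • 1 + ((d - θ) / n) • 𝐉 - G.adjMatrix ℝ with hM
  have hherm : star M = M :=
    ((isHermitian_one.smul (.all _)).add (posSemidef_of_one.isHermitian.smul (.all _))).sub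
      (G.isHermitian_adjMatrix ℝ)
  have hsq : star M * M = (θ - τ) • M := by
    rw [hherm, hM]
    simp only [mul_sub, sub_mul, mul_add, add_mul, one_mul, mul_one, mul_smul_comm, smul_mul_assoc,
      adjMatrix_mul_of_one hsrg.regular, of_one_mul_adjMatrix hsrg.regular, of_one_mul_of_one,
      adjMatrix_mul_self_of_isSRGWith hsrg, hsrg.card]
    match_scalars
    · linear_combination hprod
    · field_simp
      linear_combination hcard
    · linear_combination -hsum
  rw [← sub_nonneg, ← hM, ← inv_smul_smul₀ (sub_pos.2 hlt).ne' M, ← hsq]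
  exact smul_nonneg (inv_nonneg.2 (sub_pos.2 hlt).le) (star_mul_self_nonneg M)

theorem neg_smul_one_le_adjMatrix_compl [DecidableEq V] [Nonempty V] (hsrg : G.IsSRGWith n d l μ)
    (hsum : θ + τ = l - μ) (hprod : θ * τ = μ - d) (hlt : τ < θ) (hθ : 0 ≤ θ) :
    -((1 + θ) • 1) ≤ Gᶜ.adjMatrix ℝ := by
  have hdn : (d : ℝ) ≤ n := mod_cast hsrg.card ▸ (lt_card_of_isRegularOfDegree hsrg.regular).le
  have hcoef : (d - θ) / n ≤ 1 := div_le_one_of_le₀ (by linarith) (by positivity)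
  calc -((1 + θ) • (1 : Matrix V V ℝ)) ≤ -((1 + θ) • 1) + (1 - (d - θ) / n) • 𝐉 :=
        le_add_of_nonneg_right (smul_nonneg (sub_nonneg.2 hcoef) posSemidef_of_one.nonneg)
    _ = 𝐉 - 1 - (θ • 1 + ((d - θ) / n) • 𝐉) := by module
    _ ≤ 𝐉 - 1 - G.adjMatrix ℝ := by
        gcongr
        exact adjMatrix_le_smul_one_add_smul_of_one hsrg hsum hprod hlt
    _ = Gᶜ.adjMatrix ℝ := (adjMatrix_compl_eq_sub G).symm

theorem isGreatest_spectrum_adjMatrix [DecidableEq V] [Nonempty V] (hreg : G.IsRegularOfDegree d) :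
    IsGreatest (spectrum ℝ (G.adjMatrix ℝ)) d := by
  refine ⟨mem_spectrum_of_mulVec_eq_smul one_ne_zero (adjMatrix_mulVec_one hreg), ?_⟩
  exact (le_smul_one_iff_spectrum_le (G.isHermitian_adjMatrix ℝ)).1 (adjMatrix_le_smul_one hreg)

theorem neg_of_isLeast_spectrum_adjMatrix [DecidableEq V] (hne : G ≠ ⊥)
    (hτ : IsLeast (spectrum ℝ (G.adjMatrix ℝ)) τ) : τ < 0 := by
  by_contra! hτ₀
  have hpos : (0 : Matrix V V ℝ) ≤ G.adjMatrix ℝ := by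
    rw [← zero_smul ℝ 1, smul_one_le_iff_le_spectrum (G.isHermitian_adjMatrix ℝ)]
    exact fun x hx => hτ₀.trans (hτ.2 hx)
  have hzero : G.adjMatrix ℝ = 0 :=
    (nonneg_iff_posSemidef.1 hpos).trace_eq_zero_iff.1 (G.trace_adjMatrix ℝ)
  obtain ⟨i, j, hij⟩ := SimpleGraph.ne_bot_iff_exists_adj.1 hne
  simpa [hij] using congrFun₂ hzero i j

-- For complete `G` the parameter `μ` is unconstrained and may exceed `d`.
theorem exists_isSRGWith_le_degree (hsrg : G.IsSRGWith n d l μ) :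
    ∃ μ' ≤ d, G.IsSRGWith n d l μ' := by
  by_cases htop : G = ⊤
  · exact ⟨0, d.zero_le, { hsrg with of_not_adj := fun i j hij hadj => by simp_all }⟩
  · obtain ⟨i, j, hij, hadj⟩ := SimpleGraph.ne_top_iff_exists_not_adj.1 htop
    refine ⟨μ, ?_, hsrg⟩
    rw [← hsrg.of_not_adj hij hadj, ← hsrg.regular.degree_eq i]
    exact G.card_commonNeighbors_le_degree_left i j

theorem one_add_div_eq_card_mul_div [Nonempty V] (hsrg : G.IsSRGWith n d l μ)
    (hsum : θ + τ = l - μ) (hprod : θ * τ = μ - d) (hθ : 0 ≤ θ) (hτ : τ < 0) :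
    1 + ((n - 1 - d : ℕ) : ℝ) / (1 + θ) = n * τ / (τ - d) := by
  have hcard := card_mul_eq_of_isSRGWith hsrg hsum hprod
  have hdn : d < n := hsrg.card ▸ lt_card_of_isRegularOfDegree hsrg.regular
  have hcast : ((n - 1 - d : ℕ) : ℝ) = n - 1 - d := by
    rw [Nat.sub_sub, Nat.cast_sub (by omega)]
    push_cast
    ring
  have hτd : τ - d ≠ 0 := (sub_neg.2 (hτ.trans_le d.cast_nonneg)).ne
  rw [hcast]
  field_simp
  linear_combination -hcard - (n : ℝ) * hprod

theorem gtheta_eq_min_of_isSRGWith [DecidableEq V] (hsrg : G.IsSRGWith n d l μ) (hne : G ≠ ⊥)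
    (hτ : IsLeast (spectrum ℝ (G.adjMatrix ℝ)) τ) (k : ℕ) :
    gtheta k G = min (k * (n * τ / (τ - d))) n := by
  obtain ⟨i, -, -⟩ := SimpleGraph.ne_bot_iff_exists_adj.1 hne
  have : Nonempty V := ⟨i⟩
  have hτ₀ : τ < 0 := neg_of_isLeast_spectrum_adjMatrix hne hτ
  obtain ⟨μ', hμd, hsrg⟩ := exists_isSRGWith_le_degree hsrg
  have hsq := sq_eq_of_mem_spectrum_of_ne hsrg hτ.1 (hτ₀.trans_le d.cast_nonneg).ne
  obtain ⟨θ, hsum⟩ : ∃ θ : ℝ, θ + τ = l - μ' := ⟨l - μ' - τ, by ring⟩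
  have hprod : θ * τ = μ' - d := by linear_combination τ * hsum - hsq
  have hθ : 0 ≤ θ := by
    refine nonneg_of_mul_nonpos_left ?_ hτ₀
    rw [hprod, sub_nonpos]
    exact_mod_cast hμd
  have hτ_le : τ • 1 ≤ G.adjMatrix ℝ :=
    (smul_one_le_iff_le_spectrum (G.isHermitian_adjMatrix ℝ)).2 fun _ hx => hτ.2 hx
  rw [← hsrg.card]
  refine le_antisymm (le_min (gtheta_le_mul_of_smul_one_le hsrg.regular hτ₀ hτ_le k)
    (gtheta_le_card k)) ?_
  rw [hsrg.card, ← one_add_div_eq_card_mul_div hsrg hsum hprod hθ hτ₀, ← hsrg.card]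
  exact min_mul_one_add_div_le_gtheta hsrg.regular.compl (by positivity)
    (neg_smul_one_le_adjMatrix_compl hsrg hsum hprod (hτ₀.trans_le hθ) hθ) k

end StronglyRegular

theorem ne_bot_of_connected_of_ne_top {V : Type*} {G : SimpleGraph V} (hconn : G.Connected)
    (hne : G ≠ ⊤) : G ≠ ⊥ := by
  rintro rfl
  have : Subsingleton V := SimpleGraph.preconnected_bot_iff_subsingleton.1 hconn.preconnected
  exact hne ((SimpleGraph.subsingleton_iff.2 this).elim _ _)

theorem stmt_14_general {V : Type*} [Fintype V] [DecidableEq V]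
    (G : SimpleGraph V) [DecidableRel G.Adj]
    (n d l μ : ℕ) (hsrg : G.IsSRGWith n d l μ) (hne : G ≠ ⊥) (hnpos : 0 < n)
    (hA : (G.adjMatrix ℝ).IsHermitian)
    (lam : Fin n → ℝ) (hsort : Antitone lam)
    (henum : ∃ e : Fin n ≃ V, ∀ i, lam i = hA.eigenvalues (e i)) (k : ℕ) :
    gtheta k G = min ((k : ℝ) * gtheta 1 G) (n : ℝ) ∧
    gtheta k G =
      min ((k : ℝ) * (n : ℝ) * lam ⟨n - 1, by omega⟩ /
            (lam ⟨n - 1, by omega⟩ - lam ⟨0, hnpos⟩)) (n : ℝ) := by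
  have : Nonempty V := Fintype.card_pos_iff.1 (hsrg.card ▸ hnpos)
  have hspec := range_eq_spectrum_of_enum hA henum
  have hmax : lam ⟨0, hnpos⟩ = d :=
    (hspec ▸ isGreatest_range_of_antitone hsort hnpos).unique
      (isGreatest_spectrum_adjMatrix hsrg.regular)
  have hmin := hspec ▸ isLeast_range_of_antitone hsort hnpos
  have hϑ := gtheta_eq_min_of_isSRGWith hsrg hne hmin
  rw [hmax]
  refine ⟨?_, by rw [hϑ k, ← mul_div_assoc, ← mul_assoc]⟩
  obtain rfl | hk := k.eq_zero_or_pos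
  · simp [hϑ 0]
  · have hkn : (n : ℝ) ≤ k * n := le_mul_of_one_le_left n.cast_nonneg (mod_cast hk)
    rw [hϑ k, hϑ 1, mul_min_of_nonneg _ _ k.cast_nonneg, min_assoc, min_eq_right hkn, Nat.cast_one,
      one_mul]

theorem stmt_14 {V : Type*} [Fintype V] [DecidableEq V]
    (G : SimpleGraph V) [DecidableRel G.Adj]
    (n d l μ : ℕ) (hsrg : G.IsSRGWith n d l μ)
    (hconn : G.Connected) (hncomplete : G ≠ ⊤) (hnpos : 0 < n)
    (hA : (G.adjMatrix ℝ).IsHermitian)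
    (lam : Fin n → ℝ) (hsort : Antitone lam)
    (henum : ∃ e : Fin n ≃ V, ∀ i, lam i = hA.eigenvalues (e i))
    (k : ℕ) (hk : 1 ≤ k) :
    gtheta k G = min ((k : ℝ) * gtheta 1 G) (n : ℝ) ∧
    gtheta k G =
      min ((k : ℝ) * (n : ℝ) * lam ⟨n - 1, by omega⟩ /
            (lam ⟨n - 1, by omega⟩ - lam ⟨0, hnpos⟩)) (n : ℝ) := by
  exact stmt_14_general G n d l μ hsrg (ne_bot_of_connected_of_ne_top hconn hncomplete) hnpos hA lam
    hsort henum k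
end

section
/- For any finite simple graph G on n vertices, its complement graph Ḡ, and any k ≥ 1: k²·n ≤ χ_k(G)·χ_k(Ḡ) ≤ k²·((n+1)/2)², and 2k·√n ≤ χ_k(G) + χ_k(Ḡ) ≤ k·(n+1). -/
open Finset

/-- The `k`-th (multi)chromatic number `χ_k(G)`: the least number of colors `R`
such that each vertex can be assigned a `k`-element set of colors with
adjacent vertices receiving disjoint sets. -/
noncomputable def multiChrom {V : Type*} (k : ℕ) (G : SimpleGraph V) : ℕ :=
  sInf {R : ℕ | ∃ f : V → Finset (Fin R),
    (∀ v, (f v).card = k) ∧ ∀ u v, G.Adj u v → Disjoint (f u) (f v)}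

/-!
If `f` and `g` are `k`-multicolorings of `G` and `Gᶜ`, the sets `f v ×ˢ g v` are pairwise disjoint,
since two distinct vertices are adjacent in `G` or in `Gᶜ`; counting pairs of colors gives
`k² n ≤ χ_k(G) χ_k(Gᶜ)`. Replacing each color of an ordinary coloring by `k` copies gives
`χ_k ≤ k χ`, so the classical Nordhaus–Gaddum inequality `χ(G) + χ(Gᶜ) ≤ n + 1` bounds the sum from
above. The other two bounds follow from these by AM-GM.

The Nordhaus–Gaddum inequality is proved by adding one vertex at a time: the new vertex needs a new
color in `G` only if its degree there is at least the number of colors used so far, and likewise in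
`Gᶜ`. Adding a vertex is modelled by passing from `V` to `Option V`, with `none` the new vertex and
`G.comap some` the graph before its addition.
-/

section NordhausGaddum

variable {V : Type*}

lemma colorable_succ_of_colorable_comap_some {G : SimpleGraph (Option V)} {a : ℕ}
    (h : (G.comap some).Colorable a) : G.Colorable (a + 1) := by
  obtain ⟨C⟩ := h
  let C' : G.Coloring (Option (Fin a)) := .mk (Option.map C) <| by
    rintro (_ | u) (_ | v) huv
    · exact absurd huv G.irrefl
    · simp
    · simp
    · simpa using C.valid huv
  simpa using C'.colorable

lemma colorable_of_colorable_comap_some_of_degree_lt {G : SimpleGraph (Option V)}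
    [Fintype (G.neighborSet none)] {a : ℕ} (h : (G.comap some).Colorable a)
    (hdeg : G.degree none < a) : G.Colorable a := by
  obtain ⟨C⟩ := h
  obtain ⟨i, hi⟩ : ∃ i, ∀ v, G.Adj none (some v) → C v ≠ i := by
    by_contra! hall
    choose v hadj hv using hall
    have hinj : Function.Injective fun i ↦ (⟨some (v i), hadj i⟩ : G.neighborSet none) := by
      intro i j hij
      have hvij : v i = v j := Option.some_injective V (congrArg Subtype.val hij)
      rw [← hv i, ← hv j, hvij]
    have hcard := Fintype.card_le_of_injective _ hinj
    rw [Fintype.card_fin, G.card_neighborSet_eq_degree] at hcard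
    omega
  refine ⟨.mk (fun w ↦ w.elim i C) ?_⟩
  rintro (_ | u) (_ | v) huv
  · exact absurd huv G.irrefl
  · exact (hi v huv).symm
  · exact hi u huv.symm
  · exact C.valid huv

lemma compl_comap_of_injective {W : Type*} (G : SimpleGraph W) {f : V → W}
    (hf : Function.Injective f) : (G.comap f)ᶜ = Gᶜ.comap f := by
  ext u v
  simp [hf.ne_iff]

lemma exists_colorable_colorable_compl_option_add_le_card_add_two [Fintype V]
    {G : SimpleGraph (Option V)} {a b : ℕ} (hab : a + b ≤ Fintype.card V + 1)
    (ha : (G.comap some).Colorable a) (hb : (Gᶜ.comap some).Colorable b) :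
    ∃ a' b', a' + b' ≤ Fintype.card V + 2 ∧ G.Colorable a' ∧ Gᶜ.Colorable b' := by
  classical
  by_cases hdeg : G.degree none < a
  · exact ⟨a, b + 1, by omega, colorable_of_colorable_comap_some_of_degree_lt ha hdeg,
      colorable_succ_of_colorable_comap_some hb⟩
  by_cases hdeg_compl : Gᶜ.degree none < b
  · exact ⟨a + 1, b, by omega, colorable_succ_of_colorable_comap_some ha,
      colorable_of_colorable_comap_some_of_degree_lt hb hdeg_compl⟩
  -- The two degrees sum to `card V`, so `a + b ≤ card V` and both graphs may use a new color.
  have hcompl : Gᶜ.degree none = Fintype.card V - G.degree none := by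
    simp [G.degree_compl]
  have hlt : G.degree none < Fintype.card V + 1 := by
    simpa using G.degree_lt_card_verts none
  exact ⟨a + 1, b + 1, by omega, colorable_succ_of_colorable_comap_some ha,
    colorable_succ_of_colorable_comap_some hb⟩

theorem exists_colorable_colorable_compl_add_le_card_add_one [Fintype V] (G : SimpleGraph V) :
    ∃ a b, a + b ≤ Fintype.card V + 1 ∧ G.Colorable a ∧ Gᶜ.Colorable b := by
  revert G
  refine Fintype.induction_empty_option (P := fun V _ ↦ ∀ G : SimpleGraph V,
    ∃ a b, a + b ≤ Fintype.card V + 1 ∧ G.Colorable a ∧ Gᶜ.Colorable b) ?_ ?_ ?_ V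
  · intro V W _ e ih G
    let := Fintype.ofEquiv W e.symm
    obtain ⟨a, b, hab, ha, hb⟩ := ih (G.comap e)
    rw [compl_comap_of_injective G e.injective] at hb
    exact ⟨a, b, Fintype.card_congr e ▸ hab,
      (SimpleGraph.colorable_congr (.comap e G)).1 ha,
      (SimpleGraph.colorable_congr (.comap e Gᶜ)).1 hb⟩
  · exact fun G ↦ ⟨0, 0, by simp, .of_isEmpty 0, .of_isEmpty 0⟩
  · intro V _ ih G
    obtain ⟨a, b, hab, ha, hb⟩ := ih (G.comap some)
    rw [compl_comap_of_injective G (Option.some_injective V)] at hb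
    simpa using exists_colorable_colorable_compl_option_add_le_card_add_two hab ha hb

end NordhausGaddum

section Multicoloring

variable {V α β : Type*} {G : SimpleGraph V} {k l : ℕ}

/-- `f` is a `k`-multicoloring of `G`. The colors form an arbitrary type, so that products and
`Fin R` can both serve as palettes. -/
def IsMulticoloring (G : SimpleGraph V) (k : ℕ) (f : V → Finset α) : Prop :=
  (∀ v, #(f v) = k) ∧ ∀ u v, G.Adj u v → Disjoint (f u) (f v)

lemma IsMulticoloring.map {f : V → Finset α} (hf : IsMulticoloring G k f) (e : α ↪ β) :
    IsMulticoloring G k fun v ↦ (f v).map e :=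
  ⟨fun v ↦ (card_map e).trans (hf.1 v), fun u v huv ↦ (disjoint_map e).2 (hf.2 u v huv)⟩

lemma IsMulticoloring.multiChrom_le [Fintype α] {f : V → Finset α} (hf : IsMulticoloring G k f) :
    multiChrom k G ≤ Fintype.card α :=
  Nat.sInf_le ⟨_, hf.map (Fintype.equivFin α).toEmbedding⟩

lemma isMulticoloring_product_fin (C : G.Coloring α) (k : ℕ) :
    IsMulticoloring G k fun v ↦ {C v} ×ˢ (univ : Finset (Fin k)) :=
  ⟨fun v ↦ by simp, fun _ _ huv ↦ disjoint_product.2 <| .inl <|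
    disjoint_singleton.2 <| C.valid huv⟩

lemma multiChrom_le_mul_of_colorable {a : ℕ} (h : G.Colorable a) (k : ℕ) :
    multiChrom k G ≤ a * k := by
  obtain ⟨C⟩ := h
  simpa using (isMulticoloring_product_fin C k).multiChrom_le

lemma exists_isMulticoloring_multiChrom [Finite V] (G : SimpleGraph V) (k : ℕ) :
    ∃ f : V → Finset (Fin (multiChrom k G)), IsMulticoloring G k f := by
  have := Fintype.ofFinite V
  have hself := isMulticoloring_product_fin G.selfColoring k
  exact Nat.sInf_mem (s := {R | ∃ f : V → Finset (Fin R), IsMulticoloring G k f})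
    ⟨_, _, hself.map (Fintype.equivFin _).toEmbedding⟩

lemma IsMulticoloring.pairwise_disjoint_product {f : V → Finset α} {g : V → Finset β}
    (hf : IsMulticoloring G k f) (hg : IsMulticoloring Gᶜ l g) :
    Pairwise fun u v ↦ Disjoint (f u ×ˢ g u) (f v ×ˢ g v) := by
  intro u v huv
  rw [disjoint_product]
  by_cases hadj : G.Adj u v
  · exact .inl (hf.2 u v hadj)
  · exact .inr (hg.2 u v ((G.compl_adj u v).2 ⟨huv, hadj⟩))

lemma IsMulticoloring.mul_card_le_card_mul_card [Fintype V] [Fintype α] [Fintype β]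
    {f : V → Finset α} {g : V → Finset β} (hf : IsMulticoloring G k f)
    (hg : IsMulticoloring Gᶜ l g) :
    k * l * Fintype.card V ≤ Fintype.card α * Fintype.card β := by
  classical
  calc k * l * Fintype.card V = ∑ v, #(f v ×ˢ g v) := by simp [hf.1, hg.1, mul_comm]
    _ = #(univ.biUnion fun v ↦ f v ×ˢ g v) :=
      (card_biUnion fun _ _ _ _ huv ↦ hf.pairwise_disjoint_product hg huv).symm
    _ ≤ Fintype.card (α × β) := card_le_univ _
    _ = Fintype.card α * Fintype.card β := Fintype.card_prod α β

theorem mul_card_le_multiChrom_mul_multiChrom_compl [Fintype V] (G : SimpleGraph V) (k l : ℕ) :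
    k * l * Fintype.card V ≤ multiChrom k G * multiChrom l Gᶜ := by
  obtain ⟨f, hf⟩ := exists_isMulticoloring_multiChrom G k
  obtain ⟨g, hg⟩ := exists_isMulticoloring_multiChrom Gᶜ l
  simpa using hf.mul_card_le_card_mul_card hg

theorem multiChrom_add_multiChrom_compl_le [Fintype V] (G : SimpleGraph V) (k : ℕ) :
    multiChrom k G + multiChrom k Gᶜ ≤ k * (Fintype.card V + 1) := by
  obtain ⟨a, b, hab, ha, hb⟩ := exists_colorable_colorable_compl_add_le_card_add_one G
  calc multiChrom k G + multiChrom k Gᶜ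
      ≤ a * k + b * k :=
        add_le_add (multiChrom_le_mul_of_colorable ha k) (multiChrom_le_mul_of_colorable hb k)
    _ = k * (a + b) := by ring
    _ ≤ k * (Fintype.card V + 1) := by gcongr

end Multicoloring

theorem stmt_15 {V : Type*} [Fintype V] (G : SimpleGraph V) (n : ℕ)
    (hn : Fintype.card V = n) (k : ℕ) (hk : 1 ≤ k) :
    ((k : ℝ) ^ 2 * (n : ℝ) ≤ (multiChrom k G : ℝ) * (multiChrom k Gᶜ : ℝ) ∧
      (multiChrom k G : ℝ) * (multiChrom k Gᶜ : ℝ) ≤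
        (k : ℝ) ^ 2 * (((n : ℝ) + 1) / 2) ^ 2) ∧
    (2 * (k : ℝ) * Real.sqrt (n : ℝ) ≤
        (multiChrom k G : ℝ) + (multiChrom k Gᶜ : ℝ) ∧
      (multiChrom k G : ℝ) + (multiChrom k Gᶜ : ℝ) ≤ (k : ℝ) * ((n : ℝ) + 1)) := by
  subst hn
  have hmul : (k : ℝ) ^ 2 * Fintype.card V ≤ multiChrom k G * multiChrom k Gᶜ := by
    rw [sq]
    exact_mod_cast mul_card_le_multiChrom_mul_multiChrom_compl G k k
  have hadd : (multiChrom k G : ℝ) + multiChrom k Gᶜ ≤ k * (Fintype.card V + 1) :=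
    mod_cast multiChrom_add_multiChrom_compl_le G k
  set n := (Fintype.card V : ℝ)
  set r := (multiChrom k G : ℝ)
  set s := (multiChrom k Gᶜ : ℝ)
  have amgm : 4 * r * s ≤ (r + s) ^ 2 := four_mul_le_sq_add r s
  refine ⟨⟨hmul, ?_⟩, ?_, hadd⟩
  · have hsq : (r + s) ^ 2 ≤ (k * (n + 1)) ^ 2 := by gcongr
    linarith
  · refine le_of_sq_le_sq ?_ (by positivity)
    calc (2 * k * √n) ^ 2 = 4 * (k ^ 2 * n) := by
          rw [mul_pow, Real.sq_sqrt (Nat.cast_nonneg _)]; ring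
      _ ≤ (r + s) ^ 2 := by linarith
end
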